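/- arXiv:2001.11308 — 3 statements merged into one kernel-verified Lean document; each statement's English description precedes it below -/
import Mathlib

section
/- Consider the uncontrolled randomised switching problem in dimension d = 3 with stochastic matrix P having rows (0, p, 1−p), (q, 0, 1−q), (r, 1−r, 0) where 0 < p, q, r < 1, and cost vector c̄ ∈ ℝ³ such that the domain D has nonempty interior. Then there exist a function H : ℝ³ → S₃(ℝ) (symmetric 3×3 matrices) and a constant L ≥ 1 such that: (1) L^{-1}|v|² ≤ vᵀ H(y) v ≤ L|v|² for all y ∈ ℝ³ and v ∈ ℝ³, and |H(y)| ≤ L; (2) H is of class C¹ with |∂_y H| ≤ L, and y ↦ H(y)^{-1} is of class C² with |H^{-1}| + |∂_y H^{-1}| + |∂²_{yy} H^{-1}| ≤ L; (3) for every y ∈ D and every v in the outward normal cone C(y), the vector H(y)v belongs to the reflection cone C_o(y) := { −∑_{i=1}^3 α_i e_i : α_i ≥ 0 and α_i = 0 whenever y_i > ∑_j P_{i,j} y_j − c̄_i }. -/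
open Matrix

/-- Bounded `C¹` functions with bounded derivative. -/
def BddC1 (f : (Fin 3 → ℝ) → ℝ) : Prop :=
  ContDiff ℝ 1 f ∧ ∃ C, ∀ y, |f y| ≤ C ∧ ‖fderiv ℝ f y‖ ≤ C

/-- Bounded `C²` functions with bounded derivatives. -/
def BddC2 (f : (Fin 3 → ℝ) → ℝ) : Prop :=
  ContDiff ℝ 2 f ∧ ∃ C, ∀ y, |f y| ≤ C ∧ ‖fderiv ℝ f y‖ ≤ C ∧ ‖fderiv ℝ (fderiv ℝ f) y‖ ≤ C

theorem BddC2.one {f} (h : BddC2 f) : BddC1 f := by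
  obtain ⟨h1, C, hC⟩ := h
  exact ⟨h1.of_le (by norm_num), C, fun y => ⟨(hC y).1, (hC y).2.1⟩⟩

theorem BddC1.add {f g} (hf : BddC1 f) (hg : BddC1 g) : BddC1 (fun y => f y + g y) := by
  obtain ⟨hf1, C, hC⟩ := hf
  obtain ⟨hg1, C', hC'⟩ := hg
  refine ⟨hf1.add hg1, C + C', fun y => ⟨?_, ?_⟩⟩
  · exact (abs_add_le _ _).trans (add_le_add (hC y).1 (hC' y).1)
  · rw [fderiv_fun_add (hf1.differentiable (by norm_num) y) (hg1.differentiable (by norm_num) y)]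
    exact (norm_add_le _ _).trans (add_le_add (hC y).2 (hC' y).2)

theorem BddC1.neg {f} (hf : BddC1 f) : BddC1 (fun y => -f y) := by
  obtain ⟨hf1, C, hC⟩ := hf
  refine ⟨hf1.neg, C, fun y => ⟨?_, ?_⟩⟩
  · simpa using (hC y).1
  · rw [fderiv_fun_neg, norm_neg]; exact (hC y).2

theorem BddC1.sub {f g} (hf : BddC1 f) (hg : BddC1 g) : BddC1 (fun y => f y - g y) := by
  simpa only [sub_eq_add_neg] using hf.add hg.neg

theorem BddC1.mul {f g} (hf : BddC1 f) (hg : BddC1 g) : BddC1 (fun y => f y * g y) := by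
  obtain ⟨hf1, C, hC⟩ := hf
  obtain ⟨hg1, C', hC'⟩ := hg
  have h0 : 0 ≤ C := (abs_nonneg _).trans (hC 0).1
  have h0' : 0 ≤ C' := (abs_nonneg _).trans (hC' 0).1
  refine ⟨hf1.mul hg1, 2 * (C * C'), fun y => ⟨?_, ?_⟩⟩
  · rw [abs_mul]
    have := mul_le_mul (hC y).1 (hC' y).1 (abs_nonneg _) h0
    nlinarith [mul_nonneg h0 h0']
  · rw [fderiv_fun_mul (hf1.differentiable (by norm_num) y) (hg1.differentiable (by norm_num) y)]
    refine (norm_add_le _ _).trans ?_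
    rw [norm_smul, norm_smul, Real.norm_eq_abs, Real.norm_eq_abs]
    have h1 := mul_le_mul (hC y).1 (hC' y).2 (norm_nonneg _) h0
    have h2 := mul_le_mul (hC' y).1 (hC y).2 (norm_nonneg _) h0'
    linarith

theorem BddC1.inv {f} (hf : BddC1 f) {e : ℝ} (he : 0 < e) (h : ∀ y, e ≤ f y) :
    BddC1 (fun y => (f y)⁻¹) := by
  obtain ⟨hf1, C, hC⟩ := hf
  have hpos : ∀ y, 0 < f y := fun y => he.trans_le (h y)
  have h0 : 0 ≤ C := (abs_nonneg _).trans (hC 0).1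
  have hle : ∀ y, (f y)⁻¹ ≤ e⁻¹ := fun y => inv_anti₀ he (h y)
  refine ⟨hf1.inv (fun y => (hpos y).ne'), e⁻¹ + (e⁻¹) ^ 2 * C, fun y => ⟨?_, ?_⟩⟩
  · rw [abs_of_pos (inv_pos.2 (hpos y))]
    have := mul_nonneg (sq_nonneg e⁻¹) h0
    linarith [hle y]
  · have hd : HasFDerivAt (fun y => (f y)⁻¹) ((-((f y) ^ 2)⁻¹) • fderiv ℝ f y) y :=
      (hasDerivAt_inv (hpos y).ne').comp_hasFDerivAt y
        (hf1.differentiable (by norm_num) y).hasFDerivAt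
    rw [hd.fderiv, norm_smul, norm_neg, Real.norm_eq_abs, abs_of_pos (by have := hpos y; positivity),
      ← inv_pow]
    have h1 : ((f y)⁻¹) ^ 2 ≤ (e⁻¹) ^ 2 :=
      pow_le_pow_left₀ (inv_pos.2 (hpos y)).le (hle y) 2
    have h2 := mul_le_mul h1 (hC y).2 (norm_nonneg _) (sq_nonneg _)
    have := inv_pos.2 he
    linarith

theorem BddC2.add {f g} (hf : BddC2 f) (hg : BddC2 g) : BddC2 (fun y => f y + g y) := by
  obtain ⟨hf1, C, hC⟩ := hf
  obtain ⟨hg1, C', hC'⟩ := hg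
  have e : fderiv ℝ (fun y => f y + g y) = fun y => fderiv ℝ f y + fderiv ℝ g y := by
    funext y
    rw [fderiv_fun_add (hf1.differentiable (by norm_num) y) (hg1.differentiable (by norm_num) y)]
  have hf2 : Differentiable ℝ (fderiv ℝ f) :=
    (hf1.fderiv_right (m := 1) (by norm_num)).differentiable (by norm_num)
  have hg2 : Differentiable ℝ (fderiv ℝ g) :=
    (hg1.fderiv_right (m := 1) (by norm_num)).differentiable (by norm_num)
  refine ⟨hf1.add hg1, C + C', fun y => ⟨?_, ?_, ?_⟩⟩
  · exact (abs_add_le _ _).trans (add_le_add (hC y).1 (hC' y).1)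
  · rw [e]
    exact (norm_add_le _ _).trans (add_le_add (hC y).2.1 (hC' y).2.1)
  · rw [e, fderiv_fun_add (hf2 y) (hg2 y)]
    exact (ContinuousLinearMap.opNorm_add_le _ _).trans (add_le_add (hC y).2.2 (hC' y).2.2)

theorem BddC2.smul {f} (hf : BddC2 f) (a : ℝ) : BddC2 (fun y => a * f y) := by
  obtain ⟨hf1, C, hC⟩ := hf
  have e : fderiv ℝ (fun y => a * f y) = fun y => a • fderiv ℝ f y := by
    funext y
    rw [fderiv_const_mul (hf1.differentiable (by norm_num) y)]
  have hf2 : Differentiable ℝ (fderiv ℝ f) :=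
    (hf1.fderiv_right (m := 1) (by norm_num)).differentiable (by norm_num)
  refine ⟨contDiff_const.mul hf1, |a| * C, fun y => ⟨?_, ?_, ?_⟩⟩
  · rw [abs_mul]; exact mul_le_mul_of_nonneg_left (hC y).1 (abs_nonneg _)
  · rw [e, norm_smul]; exact mul_le_mul_of_nonneg_left (hC y).2.1 (abs_nonneg _)
  · rw [e, fderiv_fun_const_smul (hf2 y)]
    refine (ContinuousLinearMap.opNorm_smul_le _ _).trans ?_
    exact mul_le_mul_of_nonneg_left (hC y).2.2 (abs_nonneg _)

theorem BddC2.neg {f} (hf : BddC2 f) : BddC2 (fun y => -f y) := by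
  simpa using hf.smul (-1)

theorem bdd_of_zero_outside {f : ℝ → ℝ} (hf : Continuous f)
    (h : ∀ x, x ∉ Set.Icc (0 : ℝ) 1 → f x = 0) : ∃ C, 0 ≤ C ∧ ∀ x, |f x| ≤ C := by
  obtain ⟨C, hC⟩ := (isCompact_Icc (a := (0 : ℝ)) (b := 1)).exists_bound_of_continuousOn
    hf.continuousOn
  refine ⟨max C 0, le_max_right _ _, fun x => ?_⟩
  by_cases hx : x ∈ Set.Icc (0 : ℝ) 1
  · exact (hC x hx).trans (le_max_left _ _)
  · rw [h x hx, abs_zero]; exact le_max_right _ _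

theorem deriv_zero_outside {f : ℝ → ℝ} {a b : ℝ} (h0 : ∀ x < 0, f x = a) (h1 : ∀ x, 1 < x → f x = b)
    (x : ℝ) (hx : x ∉ Set.Icc (0 : ℝ) 1) : deriv f x = 0 := by
  rcases lt_or_ge x 0 with h | h
  · have : f =ᶠ[nhds x] fun _ => a := by
      filter_upwards [Iio_mem_nhds h] with z hz using h0 z hz
    rw [this.deriv_eq, deriv_const]
  · have h' : 1 < x := by
      by_contra hh
      exact hx ⟨h, not_lt.1 hh⟩
    have : f =ᶠ[nhds x] fun _ => b := by
      filter_upwards [Ioi_mem_nhds h'] with z hz using h1 z hz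
    rw [this.deriv_eq, deriv_const]

theorem bddC2_transition (A : (Fin 3 → ℝ) →L[ℝ] ℝ) (b : ℝ) :
    BddC2 (fun y => Real.smoothTransition (A y + b)) := by
  set s := Real.smoothTransition with hs
  have hsC : ContDiff ℝ 2 s := Real.smoothTransition.contDiff
  have hs1 : ContDiff ℝ 1 (deriv s) :=
    ((contDiff_succ_iff_deriv (n := 1) (f := s)).1 (by rw [one_add_one_eq_two]; exact hsC)).2.2
  have hs2 : Continuous (deriv (deriv s)) := hs1.continuous_deriv (by norm_num)
  have z1 := deriv_zero_outside (f := s) (a := 0) (b := 1)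
    (fun x hx => Real.smoothTransition.zero_of_nonpos hx.le)
    (fun x hx => Real.smoothTransition.one_of_one_le hx.le)
  have z2 := deriv_zero_outside (f := deriv s) (a := 0) (b := 0)
    (fun x hx => z1 x (fun h => absurd h.1 (not_le.2 hx)))
    (fun x hx => z1 x (fun h => absurd h.2 (not_le.2 hx)))
  obtain ⟨C1, hC10, hC1⟩ := bdd_of_zero_outside hs1.continuous z1
  obtain ⟨C2, hC20, hC2⟩ := bdd_of_zero_outside hs2 z2
  have hA : ∀ y, HasFDerivAt (fun y => A y + b) A y := fun y => A.hasFDerivAt.add_const b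
  have e : fderiv ℝ (fun y => s (A y + b)) = fun y => deriv s (A y + b) • A := by
    funext y
    exact (((hsC.differentiable (by norm_num) (A y + b)).hasDerivAt).comp_hasFDerivAt y
      (hA y)).fderiv
  refine ⟨hsC.comp (A.contDiff.add contDiff_const), 1 + C1 * ‖A‖ + C2 * ‖A‖ * ‖A‖,
    fun y => ⟨?_, ?_, ?_⟩⟩
  · have := Real.smoothTransition.le_one (A y + b)
    have h0 := Real.smoothTransition.nonneg (A y + b)
    rw [abs_of_nonneg h0]
    have : 0 ≤ C1 * ‖A‖ + C2 * ‖A‖ * ‖A‖ := by positivity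
    linarith
  · rw [e]
    have : ‖deriv s (A y + b) • A‖ ≤ C1 * ‖A‖ := by
      rw [norm_smul]; exact mul_le_mul_of_nonneg_right (hC1 _) (norm_nonneg _)
    have : 0 ≤ C2 * ‖A‖ * ‖A‖ := by positivity
    show ‖deriv s (A y + b) • A‖ ≤ _
    linarith
  · rw [e]
    have hd : HasFDerivAt (fun y => deriv s (A y + b))
        (deriv (deriv s) (A y + b) • A) y :=
      HasDerivAt.comp_hasFDerivAt (h₂ := deriv s) y
        (hs1.differentiable (by norm_num) (A y + b)).hasDerivAt (hA y)
    rw [(hd.smul_const A).fderiv, ContinuousLinearMap.norm_smulRight_apply, norm_smul]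
    have : ‖deriv (deriv s) (A y + b)‖ * ‖A‖ * ‖A‖ ≤ C2 * ‖A‖ * ‖A‖ := by
      have := hC2 (A y + b)
      rw [Real.norm_eq_abs]
      gcongr
    have : 0 ≤ C1 * ‖A‖ := by positivity
    linarith

/-- Weighted graph Laplacian plus a diagonal. -/
def lapM (x y z a b c : ℝ) : Matrix (Fin 3) (Fin 3) ℝ :=
  !![x + y + a, -x, -y; -x, x + z + b, -z; -y, -z, y + z + c]

theorem lapM_det (x y z a b c : ℝ) : (lapM x y z a b c).det =
    a * b * c + (a + b + c) * (x * y + x * z + y * z) +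
    x * (a * c + b * c) + y * (a * b + b * c) + z * (a * b + a * c) := by
  simp [lapM, Matrix.det_fin_three]; ring

theorem lapM_form (x y z a b c : ℝ) (v : Fin 3 → ℝ) :
    v ⬝ᵥ (lapM x y z a b c *ᵥ v) = x * (v 0 - v 1) ^ 2 + y * (v 0 - v 2) ^ 2
      + z * (v 1 - v 2) ^ 2 + a * v 0 ^ 2 + b * v 1 ^ 2 + c * v 2 ^ 2 := by
  simp [lapM, dotProduct, Matrix.mulVec, Fin.sum_univ_three]; ring

theorem lapM_form_lower (x y z a b c δ : ℝ) (v : Fin 3 → ℝ) (hδ : 0 ≤ δ)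
    (hx : δ ≤ x) (hy : δ ≤ y) (hz : δ ≤ z) (ha : 0 ≤ a) (hb : 0 ≤ b) (hc : 0 ≤ c)
    (h : δ ≤ a ∨ δ ≤ b ∨ δ ≤ c) :
    δ / 5 * (∑ i, (v i) ^ 2) ≤ v ⬝ᵥ (lapM x y z a b c *ᵥ v) := by
  rw [lapM_form, Fin.sum_univ_three]
  have h1 := mul_le_mul_of_nonneg_right hx (sq_nonneg (v 0 - v 1))
  have h2 := mul_le_mul_of_nonneg_right hy (sq_nonneg (v 0 - v 2))
  have h3 := mul_le_mul_of_nonneg_right hz (sq_nonneg (v 1 - v 2))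
  have h4 := mul_nonneg ha (sq_nonneg (v 0))
  have h5 := mul_nonneg hb (sq_nonneg (v 1))
  have h6 := mul_nonneg hc (sq_nonneg (v 2))
  have key : ∀ s t u : ℝ, δ / 5 * (s ^ 2 + t ^ 2 + u ^ 2) ≤
      δ * (s - t) ^ 2 + δ * (s - u) ^ 2 + δ * s ^ 2 := by
    intro s t u
    have : s ^ 2 + t ^ 2 + u ^ 2 ≤ 5 * ((s - t) ^ 2 + (s - u) ^ 2 + s ^ 2) := by
      nlinarith [sq_nonneg (2 * s - t), sq_nonneg (2 * s - u), sq_nonneg (s - t),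
        sq_nonneg (s - u), sq_nonneg s]
    nlinarith [mul_le_mul_of_nonneg_left this hδ]
  have p1 := mul_nonneg hδ (sq_nonneg (v 0 - v 1))
  have p2 := mul_nonneg hδ (sq_nonneg (v 0 - v 2))
  have p3 := mul_nonneg hδ (sq_nonneg (v 1 - v 2))
  rcases h with h | h | h
  · have := mul_le_mul_of_nonneg_right h (sq_nonneg (v 0))
    have := key (v 0) (v 1) (v 2)
    linarith
  · have := mul_le_mul_of_nonneg_right h (sq_nonneg (v 1))
    have := key (v 1) (v 0) (v 2)
    have e : (v 1 - v 0) ^ 2 = (v 0 - v 1) ^ 2 := by ring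
    rw [e] at this
    linarith
  · have := mul_le_mul_of_nonneg_right h (sq_nonneg (v 2))
    have := key (v 2) (v 0) (v 1)
    have e : (v 2 - v 0) ^ 2 = (v 0 - v 2) ^ 2 := by ring
    have e' : (v 2 - v 1) ^ 2 = (v 1 - v 2) ^ 2 := by ring
    rw [e, e'] at this
    linarith

theorem lapM_inv_entry (x y z a b c : (Fin 3 → ℝ) → ℝ) (hx : BddC1 x) (hy : BddC1 y)
    (hz : BddC1 z) (ha : BddC1 a) (hb : BddC1 b) (hc : BddC1 c) (e : ℝ) (he : 0 < e)
    (hdet : ∀ t, e ≤ (lapM (x t) (y t) (z t) (a t) (b t) (c t)).det) (i j : Fin 3) :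
    BddC1 (fun t => (lapM (x t) (y t) (z t) (a t) (b t) (c t))⁻¹ i j) := by
  have hd : BddC1 (fun t => (lapM (x t) (y t) (z t) (a t) (b t) (c t)).det) := by
    simp only [lapM_det]
    repeat' first
      | assumption
      | apply BddC1.add
      | apply BddC1.mul
  have hd' := hd.inv he hdet
  simp only [Matrix.inv_def, Ring.inverse_eq_inv', Matrix.smul_apply, smul_eq_mul]
  apply hd'.mul
  simp only [lapM, Matrix.adjugate_fin_three]
  fin_cases i <;> fin_cases j <;> simp <;>
  repeat' first
      | assumption
      | apply BddC1.add
      | apply BddC1.sub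
      | apply BddC1.mul
      | apply BddC1.neg

theorem bddC2_aff (k a0 a1 a2 b : ℝ) :
    BddC2 (fun y => Real.smoothTransition (k * (a0 * y 0 + a1 * y 1 + a2 * y 2 + b))) := by
  have h := bddC2_transition (k • (a0 • ContinuousLinearMap.proj (R := ℝ) (φ := fun _ : Fin 3 => ℝ) 0
    + a1 • ContinuousLinearMap.proj (R := ℝ) (φ := fun _ : Fin 3 => ℝ) 1
    + a2 • ContinuousLinearMap.proj (R := ℝ) (φ := fun _ : Fin 3 => ℝ) 2)) (k * b)
  convert h using 3
  simp
  ring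

theorem core (x y z a b c : (Fin 3 → ℝ) → ℝ) (hx : BddC2 x) (hy : BddC2 y)
    (hz : BddC2 z) (ha : BddC2 a) (hb : BddC2 b) (hc : BddC2 c) (δ : ℝ) (hδ : 0 < δ)
    (hxδ : ∀ t, δ ≤ x t) (hyδ : ∀ t, δ ≤ y t) (hzδ : ∀ t, δ ≤ z t)
    (ha0 : ∀ t, 0 ≤ a t) (hb0 : ∀ t, 0 ≤ b t) (hc0 : ∀ t, 0 ≤ c t)
    (hδ' : ∀ t, δ ≤ a t ∨ δ ≤ b t ∨ δ ≤ c t)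
    (H G : (Fin 3 → ℝ) → Matrix (Fin 3) (Fin 3) ℝ)
    (hG : G = fun t => lapM (x t) (y t) (z t) (a t) (b t) (c t))
    (hH : H = fun t => (G t)⁻¹) :
    (∀ t, H t * G t = 1) ∧ ∃ L : ℝ,
      1 ≤ L ∧
      (∀ y, (H y).IsSymm) ∧
      (∀ y v : Fin 3 → ℝ,
        L⁻¹ * (∑ i, (v i) ^ 2) ≤ v ⬝ᵥ (H y *ᵥ v) ∧
        v ⬝ᵥ (H y *ᵥ v) ≤ L * (∑ i, (v i) ^ 2)) ∧
      (∀ y i j, |H y i j| ≤ L) ∧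
      (∀ i j : Fin 3, ContDiff ℝ 1 (fun y => H y i j)) ∧
      (∀ (y : Fin 3 → ℝ) (i j : Fin 3), ‖fderiv ℝ (fun y' => H y' i j) y‖ ≤ L) ∧
      (∀ i j : Fin 3, ContDiff ℝ 2 (fun y => (H y)⁻¹ i j)) ∧
      (∀ (y : Fin 3 → ℝ) (i j : Fin 3),
        |(H y)⁻¹ i j| ≤ L ∧
        ‖fderiv ℝ (fun y' => (H y')⁻¹ i j) y‖ ≤ L ∧
        ‖fderiv ℝ (fderiv ℝ (fun y' => (H y')⁻¹ i j)) y‖ ≤ L) := by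
  have hdet : ∀ t, δ ^ 3 ≤ (lapM (x t) (y t) (z t) (a t) (b t) (c t)).det := by
    intro t
    rw [lapM_det]
    have hx0 := hδ.le.trans (hxδ t)
    have hy0 := hδ.le.trans (hyδ t)
    have hz0 := hδ.le.trans (hzδ t)
    have hs : δ ≤ a t + b t + c t := by
      rcases hδ' t with h | h | h <;> linarith [ha0 t, hb0 t, hc0 t]
    have h1 : δ * δ ≤ x t * y t := mul_le_mul (hxδ t) (hyδ t) hδ.le hx0
    have h2 : δ * (δ * δ) ≤ (a t + b t + c t) * (x t * y t) :=
      mul_le_mul hs h1 (by positivity) (hδ.le.trans hs)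
    have := ha0 t
    have := hb0 t
    have := hc0 t
    have h3 : 0 ≤ a t * b t * c t + (a t + b t + c t) * (x t * z t + y t * z t) +
      x t * (a t * c t + b t * c t) + y t * (a t * b t + b t * c t)
      + z t * (a t * b t + a t * c t) := by positivity
    nlinarith
  have hunit : ∀ t, IsUnit (G t).det := by
    intro t
    rw [hG]
    exact (lt_of_lt_of_le (by positivity) (hdet t)).ne'.isUnit
  have hHG : ∀ t, H t * G t = 1 := by
    intro t; rw [hH]; exact Matrix.nonsing_inv_mul _ (hunit t)
  have hGH : ∀ t, G t * H t = 1 := by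
    intro t; rw [hH]; exact Matrix.mul_nonsing_inv _ (hunit t)
  have hinv : ∀ t, (H t)⁻¹ = G t := by
    intro t; rw [hH]; exact Matrix.nonsing_inv_nonsing_inv _ (hunit t)
  have hH1 : ∀ i j, BddC1 (fun t => H t i j) := by
    intro i j
    rw [hH, hG]
    exact lapM_inv_entry x y z a b c hx.one hy.one hz.one ha.one hb.one hc.one (δ ^ 3)
      (by positivity) hdet i j
  have hG2 : ∀ i j, BddC2 (fun t => G t i j) := by
    intro i j
    rw [hG]
    simp only [lapM]
    fin_cases i <;> fin_cases j <;> simp <;>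
    repeat' first
      | assumption
      | apply BddC2.add
      | apply BddC2.neg
  have hGs : ∀ t, (G t).IsSymm := by
    intro t
    rw [hG]
    ext i j
    fin_cases i <;> fin_cases j <;> simp [lapM]
  refine ⟨hHG, ?_⟩
  choose hH1c C1 hC1 using hH1
  choose hG2c C2 hC2 using hG2
  have hle : ∀ (C : Fin 3 → Fin 3 → ℝ) (i j : Fin 3), C i j ≤ ∑ i, ∑ j, |C i j| := by
    intro C i j
    calc C i j ≤ |C i j| := le_abs_self _
      _ ≤ ∑ j, |C i j| := Finset.single_le_sum (f := fun j => |C i j|)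
          (fun _ _ => abs_nonneg _) (Finset.mem_univ j)
      _ ≤ _ := Finset.single_le_sum (f := fun i => ∑ j, |C i j|)
          (fun _ _ => Finset.sum_nonneg fun _ _ => abs_nonneg _) (Finset.mem_univ i)
  set S1 := ∑ i, ∑ j, |C1 i j| with hS1
  set S2 := ∑ i, ∑ j, |C2 i j| with hS2
  have hS1p : 0 ≤ S1 := Finset.sum_nonneg fun _ _ => Finset.sum_nonneg fun _ _ => abs_nonneg _
  have hS2p : 0 ≤ S2 := Finset.sum_nonneg fun _ _ => Finset.sum_nonneg fun _ _ => abs_nonneg _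
  have hε : 0 < δ / 5 := by positivity
  set ε := δ / 5 with hεd
  set L := 1 + S1 + S2 + ε⁻¹ + 9 * S2 ^ 2 * ε⁻¹ with hL
  have hei : 0 < ε⁻¹ := inv_pos.2 hε
  have hq : 0 ≤ 9 * S2 ^ 2 * ε⁻¹ := by positivity
  have hL1 : 1 ≤ L := by linarith
  have hLp : 0 < L := by linarith
  have hb1 : ∀ i j, C1 i j ≤ L := fun i j => by linarith [hle C1 i j]
  have hb2 : ∀ i j, C2 i j ≤ L := fun i j => by linarith [hle C2 i j]
  refine ⟨L, hL1, ?_, ?_, fun y i j => ((hC1 i j y).1).trans (hb1 i j), hH1c,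
    fun y i j => ((hC1 i j y).2).trans (hb1 i j), ?_, ?_⟩
  · intro t
    rw [hH]
    show ((G t)⁻¹)ᵀ = (G t)⁻¹
    rw [Matrix.transpose_nonsing_inv, hGs t]
  · intro t v
    set u := H t *ᵥ v with hu
    have hv : v = G t *ᵥ u := by
      rw [hu, Matrix.mulVec_mulVec, hGH, Matrix.one_mulVec]
    have h1 : ε * (∑ i, (u i) ^ 2) ≤ v ⬝ᵥ u := by
      rw [dotProduct_comm]
      rw [hv, hG]
      exact lapM_form_lower _ _ _ _ _ _ δ u hδ.le (hxδ t) (hyδ t) (hzδ t) (ha0 t) (hb0 t) (hc0 t)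
        (hδ' t)
    have h2 : ε * (v ⬝ᵥ u) ≤ ∑ i, (v i) ^ 2 := by
      have h3 : ε * (ε * (∑ i, (u i) ^ 2)) ≤ ε * (v ⬝ᵥ u) := mul_le_mul_of_nonneg_left h1 hε.le
      simp only [dotProduct, Fin.sum_univ_three] at h3 ⊢
      nlinarith [sq_nonneg (v 0 - ε * u 0), sq_nonneg (v 1 - ε * u 1), sq_nonneg (v 2 - ε * u 2)]
    have h4 : ∑ i, (v i) ^ 2 ≤ 9 * S2 ^ 2 * (∑ i, (u i) ^ 2) := by
      have h5 : ∀ i, (v i) ^ 2 ≤ 3 * S2 ^ 2 * (∑ i, (u i) ^ 2) := by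
        intro i
        have h6 : ∀ j, (G t i j) ^ 2 ≤ S2 ^ 2 := fun j =>
          sq_le_sq' (by linarith [(abs_le.1 ((hC2 i j t).1.trans (hle C2 i j))).1])
            (abs_le.1 ((hC2 i j t).1.trans (hle C2 i j))).2
        have e : v i = ∑ j, G t i j * u j := by
          conv_lhs => rw [hv]
          rfl
        rw [e]
        refine (Finset.sum_mul_sq_le_sq_mul_sq _ _ _).trans ?_
        apply mul_le_mul_of_nonneg_right _ (Finset.sum_nonneg fun _ _ => sq_nonneg _)
        rw [Fin.sum_univ_three]
        linarith [h6 0, h6 1, h6 2]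
      have := h5 0
      have := h5 1
      have := h5 2
      rw [Fin.sum_univ_three (fun i => v i ^ 2)]
      linarith
    have hvv : 0 ≤ ∑ i, (v i) ^ 2 := Finset.sum_nonneg fun _ _ => sq_nonneg _
    have huu : 0 ≤ ∑ i, (u i) ^ 2 := Finset.sum_nonneg fun _ _ => sq_nonneg _
    have hvu : 0 ≤ v ⬝ᵥ u := le_trans (by positivity) h1
    have h7 : ∑ i, (u i) ^ 2 ≤ ε⁻¹ * (v ⬝ᵥ u) := by
      rw [inv_mul_eq_div, le_div_iff₀ hε]; linarith
    have h8 : v ⬝ᵥ u ≤ ε⁻¹ * ∑ i, (v i) ^ 2 := by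
      rw [inv_mul_eq_div, le_div_iff₀ hε]; linarith
    constructor
    · rw [inv_mul_le_iff₀ hLp]
      have h9 : 9 * S2 ^ 2 * (∑ i, (u i) ^ 2) ≤ 9 * S2 ^ 2 * (ε⁻¹ * (v ⬝ᵥ u)) :=
        mul_le_mul_of_nonneg_left h7 (by positivity)
      have h10 : (9 * S2 ^ 2 * ε⁻¹) * (v ⬝ᵥ u) ≤ L * (v ⬝ᵥ u) :=
        mul_le_mul_of_nonneg_right (by linarith) hvu
      linarith
    · exact h8.trans (mul_le_mul_of_nonneg_right (by linarith) hvv)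
  · intro i j
    simp only [hinv]
    exact hG2c i j
  · intro t i j
    simp only [hinv]
    exact ⟨(hC2 i j t).1.trans (hb2 i j), (hC2 i j t).2.1.trans (hb2 i j),
      (hC2 i j t).2.2.trans (hb2 i j)⟩

theorem comb_lower (k0 k1 k2 χ : ℝ) (h0 : 0 < k0) (h1 : 0 < k1) (h2 : 0 < k2) (hχ : 0 < χ) :
    ∃ d, 0 < d ∧ ∀ w0 w1 w2 : ℝ, 0 ≤ w0 → 0 ≤ w1 → 0 ≤ w2 → (χ ≤ w0 ∨ χ ≤ w1 ∨ χ ≤ w2) →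
      d ≤ k0 * w0 + k1 * w1 + k2 * w2 := by
  refine ⟨min (k0 * χ) (min (k1 * χ) (k2 * χ)), by positivity, ?_⟩
  intro w0 w1 w2 a0 a1 a2 h
  have b0 := mul_nonneg h0.le a0
  have b1 := mul_nonneg h1.le a1
  have b2 := mul_nonneg h2.le a2
  rcases h with h | h | h
  · have := mul_le_mul_of_nonneg_left h h0.le
    exact (min_le_left _ _).trans (by linarith)
  · have := mul_le_mul_of_nonneg_left h h1.le
    exact ((min_le_right _ _).trans (min_le_left _ _)).trans (by linarith)
  · have := mul_le_mul_of_nonneg_left h h2.le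
    exact ((min_le_right _ _).trans (min_le_right _ _)).trans (by linarith)

theorem normal_cone_rep (p q r c0 c1 c2 y0 y1 y2 v0 v1 v2 m0 m1 m2 m : ℝ)
    (hp : 0 < p ∧ p < 1) (hq : 0 < q ∧ q < 1) (hr : 0 < r ∧ r < 1)
    (hm0 : m0 = r + q * (1 - r)) (hm1 : m1 = (1 - r) + p * r) (hm2 : m2 = 1 - p * q)
    (hm : m = m0 * c0 + m1 * c1 + m2 * c2) (hmp : 0 < m)
    (s0 s1 s2 : ℝ) (hs0 : s0 = y0 - p * y1 - (1 - p) * y2 + c0)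
    (hs1 : s1 = y1 - q * y0 - (1 - q) * y2 + c1) (hs2 : s2 = y2 - r * y0 - (1 - r) * y1 + c2)
    (h0 : 0 ≤ s0) (h1 : 0 ≤ s1) (h2 : 0 ≤ s2)
    (hv : ∀ z0 z1 z2 : ℝ, 0 ≤ z0 - p * z1 - (1 - p) * z2 + c0 →
      0 ≤ z1 - q * z0 - (1 - q) * z2 + c1 → 0 ≤ z2 - r * z0 - (1 - r) * z1 + c2 →
      v0 * (z0 - y0) + v1 * (z1 - y1) + v2 * (z2 - y2) ≤ 0) :
    ∃ b0 b1 b2 : ℝ, 0 ≤ b0 ∧ 0 ≤ b1 ∧ 0 ≤ b2 ∧ b0 * s0 = 0 ∧ b1 * s1 = 0 ∧ b2 * s2 = 0 ∧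
      v0 = -(b0 - q * b1 - r * b2) ∧ v1 = -(b1 - p * b0 - (1 - r) * b2) ∧
      v2 = -(b2 - (1 - p) * b0 - (1 - q) * b1) := by
  obtain ⟨hp0, hp1⟩ := hp
  obtain ⟨hq0, hq1⟩ := hq
  obtain ⟨hr0, hr1⟩ := hr
  have he : 0 < 1 - p * q := by nlinarith
  have hne : 1 - p * q ≠ 0 := he.ne'
  have hne2 : 1 - q * p ≠ 0 := by rw [mul_comm]; exact hne
  have hm0p : 0 < m0 := by rw [hm0]; nlinarith
  have hm1p : 0 < m1 := by rw [hm1]; nlinarith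
  have hm2p : 0 < m2 := by rw [hm2]; exact he
  have hsum : v0 + v1 + v2 = 0 := by
    have A := hv (y0 + 1) (y1 + 1) (y2 + 1) (by linarith) (by linarith) (by linarith)
    have B := hv (y0 - 1) (y1 - 1) (y2 - 1) (by linarith) (by linarith) (by linarith)
    linarith
  have hms : m0 * s0 + m1 * s1 + m2 * s2 = m := by
    rw [hm, hm0, hm1, hm2, hs0, hs1, hs2]; ring
  have hbeta : ∃ b0 b1 b2 : ℝ, b0 * s0 + b1 * s1 + b2 * s2 = 0 ∧
      v0 = -(b0 - q * b1 - r * b2) ∧ v1 = -(b1 - p * b0 - (1 - r) * b2) ∧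
      v2 = -(b2 - (1 - p) * b0 - (1 - q) * b1) := by
    obtain ⟨a0, a1, e0, e1⟩ : ∃ a0 a1 : ℝ, v0 = -(a0 - q * a1) ∧ v1 = -(a1 - p * a0) := by
      refine ⟨-(v0 + q * v1) / (1 - p * q), -(v1 + p * v0) / (1 - p * q), ?_, ?_⟩ <;>
      · field_simp
        ring
    obtain ⟨t, ht⟩ : ∃ t, a0 * s0 + a1 * s1 + t * m = 0 :=
      ⟨-(a0 * s0 + a1 * s1) / m, by field_simp; ring⟩
    refine ⟨a0 + t * m0, a1 + t * m1, t * m2, ?_, ?_, ?_, ?_⟩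
    · rw [← hms] at ht; linarith
    · rw [e0, hm0, hm1, hm2]; ring
    · rw [e1, hm0, hm1, hm2]; ring
    · have : v2 = -v0 - v1 := by linarith
      rw [this, e0, e1, hm0, hm1, hm2]; ring
  obtain ⟨b0, b1, b2, hb, e0, e1, e2⟩ := hbeta
  have key : ∀ t0 t1 t2 : ℝ, 0 ≤ t0 → 0 ≤ t1 → 0 ≤ t2 → m0 * t0 + m1 * t1 + m2 * t2 = m →
      0 ≤ b0 * t0 + b1 * t1 + b2 * t2 := by
    intro t0 t1 t2 g0 g1 g2 hmt
    obtain ⟨z0, z1, f0, f1⟩ : ∃ z0 z1 : ℝ, z0 - p * z1 + c0 = t0 ∧ z1 - q * z0 + c1 = t1 := by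
      refine ⟨((t0 - c0) + p * (t1 - c1)) / (1 - p * q),
        ((t1 - c1) + q * (t0 - c0)) / (1 - p * q), ?_, ?_⟩ <;>
      · field_simp
        ring
    have f2 : -r * z0 - (1 - r) * z1 + c2 = t2 := by
      have : m2 * (-r * z0 - (1 - r) * z1 + c2) = m2 * t2 := by
        have : m2 * t2 = m - m0 * t0 - m1 * t1 := by linarith
        rw [this, hm, ← f0, ← f1, hm0, hm1, hm2]; ring
      exact mul_left_cancel₀ hm2p.ne' this
    have := hv z0 z1 0 (by linarith) (by linarith) (by linarith)
    rw [e0, e1, e2] at this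
    have e : b0 * t0 + b1 * t1 + b2 * t2 = b0 * (t0 - s0) + b1 * (t1 - s1) + b2 * (t2 - s2) := by
      linarith
    rw [e, ← f0, ← f1, ← f2, hs0, hs1, hs2]
    linarith
  have B0 : 0 ≤ b0 := by
    have := key (m / m0) 0 0 (by positivity) le_rfl le_rfl (by field_simp; ring)
    have hh : 0 < m / m0 := by positivity
    nlinarith
  have B1 : 0 ≤ b1 := by
    have := key 0 (m / m1) 0 le_rfl (by positivity) le_rfl (by field_simp; ring)
    have hh : 0 < m / m1 := by positivity
    nlinarith
  have B2 : 0 ≤ b2 := by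
    have := key 0 0 (m / m2) le_rfl le_rfl (by positivity) (by field_simp; ring)
    have hh : 0 < m / m2 := by positivity
    nlinarith
  have g0 := mul_nonneg B0 h0
  have g1 := mul_nonneg B1 h1
  have g2 := mul_nonneg B2 h2
  exact ⟨b0, b1, b2, B0, B1, B2, by linarith, by linarith, by linarith, e0, e1, e2⟩

/-- The uncontrolled randomised switching problem in dimension 3
with transition matrix `P = !![0, p, 1−p; q, 0, 1−q; r, 1−r, 0]`, `0 < p, q, r < 1`,
and cost vector `c̄` such that `D` has nonempty interior.  There exist
`H : ℝ³ → S₃(ℝ)` and `L ≥ 1` such that: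
(1) `L⁻¹|v|² ≤ vᵀ H(y) v ≤ L|v|²` and `|H(y)| ≤ L` (entrywise);
(2) `H` is `C¹` with `|∂H| ≤ L`, and `y ↦ H(y)⁻¹` is `C²` with
`|H⁻¹| + |∂H⁻¹| + |∂²H⁻¹| ≤ L` (entrywise, derivative norms bounded by `L`);
(3) for every `y ∈ D` and `v` in the outward normal cone at `y`, `H(y) v` lies in
the reflection cone `C_o(y)`. -/
theorem existence_of_smooth_symmetric_reflection_operator_dim3
    (p q r : ℝ)
    (hp : 0 < p ∧ p < 1) (hq : 0 < q ∧ q < 1) (hr : 0 < r ∧ r < 1)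
    (P : Matrix (Fin 3) (Fin 3) ℝ)
    (hP : P = !![0, p, 1 - p; q, 0, 1 - q; r, 1 - r, 0])
    (c : Fin 3 → ℝ)
    (D : Set (Fin 3 → ℝ))
    (hD : D = {x | ∀ i, (∑ j, P i j * x j) - c i ≤ x i})
    (hint : (interior D).Nonempty) :
    ∃ (H : (Fin 3 → ℝ) → Matrix (Fin 3) (Fin 3) ℝ) (L : ℝ),
      1 ≤ L ∧
      (∀ y, (H y).IsSymm) ∧
      (∀ y v : Fin 3 → ℝ,
        L⁻¹ * (∑ i, (v i) ^ 2) ≤ v ⬝ᵥ (H y *ᵥ v) ∧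
        v ⬝ᵥ (H y *ᵥ v) ≤ L * (∑ i, (v i) ^ 2)) ∧
      (∀ y i j, |H y i j| ≤ L) ∧
      (∀ i j : Fin 3, ContDiff ℝ 1 (fun y => H y i j)) ∧
      (∀ (y : Fin 3 → ℝ) (i j : Fin 3), ‖fderiv ℝ (fun y' => H y' i j) y‖ ≤ L) ∧
      (∀ i j : Fin 3, ContDiff ℝ 2 (fun y => (H y)⁻¹ i j)) ∧
      (∀ (y : Fin 3 → ℝ) (i j : Fin 3),
        |(H y)⁻¹ i j| ≤ L ∧
        ‖fderiv ℝ (fun y' => (H y')⁻¹ i j) y‖ ≤ L ∧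
        ‖fderiv ℝ (fderiv ℝ (fun y' => (H y')⁻¹ i j)) y‖ ≤ L) ∧
      (∀ y ∈ D, ∀ v : Fin 3 → ℝ,
        (∀ z ∈ D, (∑ i, v i * (z i - y i)) ≤ 0) →
        ∃ α : Fin 3 → ℝ, (∀ i, 0 ≤ α i) ∧
          (∀ i, (∑ j, P i j * y j) - c i < y i → α i = 0) ∧
          H y *ᵥ v = -α) := by
  subst hP
  have hmem : ∀ x, x ∈ D ↔ (0 ≤ x 0 - p * x 1 - (1 - p) * x 2 + c 0 ∧
      0 ≤ x 1 - q * x 0 - (1 - q) * x 2 + c 1 ∧ 0 ≤ x 2 - r * x 0 - (1 - r) * x 1 + c 2) := by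
    intro x
    rw [hD]
    simp only [Set.mem_setOf_eq, Fin.forall_fin_succ, Fin.sum_univ_three]
    simp
    constructor
    · rintro ⟨h0, h1, h2⟩
      exact ⟨by linarith, by linarith, by linarith⟩
    · rintro ⟨h0, h1, h2⟩
      exact ⟨by linarith, by linarith, by linarith⟩
  obtain ⟨m0, hm0⟩ : ∃ m0, m0 = r + q * (1 - r) := ⟨_, rfl⟩
  obtain ⟨m1, hm1⟩ : ∃ m1, m1 = (1 - r) + p * r := ⟨_, rfl⟩
  obtain ⟨m2, hm2⟩ : ∃ m2, m2 = 1 - p * q := ⟨_, rfl⟩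
  obtain ⟨m, hm⟩ : ∃ m, m = m0 * c 0 + m1 * c 1 + m2 * c 2 := ⟨_, rfl⟩
  have hp' := sub_pos.2 hp.2
  have hq' := sub_pos.2 hq.2
  have hr' := sub_pos.2 hr.2
  have hp0 := hp.1
  have hq0 := hq.1
  have hr0 := hr.1
  have hm0p : 0 < m0 := by rw [hm0]; positivity
  have hm1p : 0 < m1 := by rw [hm1]; positivity
  have hm2p : 0 < m2 := by rw [hm2]; nlinarith
  have hms : ∀ x : Fin 3 → ℝ, m0 * (x 0 - p * x 1 - (1 - p) * x 2 + c 0) +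
      m1 * (x 1 - q * x 0 - (1 - q) * x 2 + c 1) +
      m2 * (x 2 - r * x 0 - (1 - r) * x 1 + c 2) = m := by
    intro x
    rw [hm, hm0, hm1, hm2]; ring
  have hmp : 0 < m := by
    obtain ⟨y, hy⟩ := hint
    have hyD := (hmem y).1 (interior_subset hy)
    have hcont : Filter.Tendsto (fun t : ℝ => y + t • (Pi.single 0 1 : Fin 3 → ℝ))
        (nhdsWithin 0 (Set.Ioi 0)) (nhds y) := by
      have : Continuous (fun t : ℝ => y + t • (Pi.single 0 1 : Fin 3 → ℝ)) := by fun_prop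
      have h := this.tendsto 0
      simp only [zero_smul, add_zero] at h
      exact h.mono_left nhdsWithin_le_nhds
    have hev := hcont.eventually (mem_interior_iff_mem_nhds.1 hy)
    obtain ⟨t, htD, ht⟩ := (hev.and self_mem_nhdsWithin).exists
    have ht : 0 < t := ht
    have h2 := (hmem _).1 htD
    simp at h2
    obtain ⟨a0, a1, a2⟩ := h2
    have h3 := hms (y + t • (Pi.single 0 1 : Fin 3 → ℝ))
    simp at h3
    rw [← h3]
    have a0' : 0 < y 0 + t - p * y 1 - (1 - p) * y 2 + c 0 := by linarith [hyD.1]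
    have b0 := mul_pos hm0p a0'
    have b1 := mul_nonneg hm1p.le a1
    have b2 := mul_nonneg hm2p.le a2
    linarith
  -- weights
  obtain ⟨w0, hw0⟩ : ∃ w : (Fin 3 → ℝ) → ℝ, w = fun x => Real.smoothTransition
    (m0 / m * (x 0 - p * x 1 - (1 - p) * x 2 + c 0)) := ⟨_, rfl⟩
  obtain ⟨w1, hw1⟩ : ∃ w : (Fin 3 → ℝ) → ℝ, w = fun x => Real.smoothTransition
    (m1 / m * (x 1 - q * x 0 - (1 - q) * x 2 + c 1)) := ⟨_, rfl⟩
  obtain ⟨w2, hw2⟩ : ∃ w : (Fin 3 → ℝ) → ℝ, w = fun x => Real.smoothTransition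
    (m2 / m * (x 2 - r * x 0 - (1 - r) * x 1 + c 2)) := ⟨_, rfl⟩
  have W0 : BddC2 w0 := by
    rw [hw0]
    convert bddC2_aff (m0 / m) 1 (-p) (-(1 - p)) (c 0) using 4
    ring
  have W1 : BddC2 w1 := by
    rw [hw1]
    convert bddC2_aff (m1 / m) (-q) 1 (-(1 - q)) (c 1) using 4
    ring
  have W2 : BddC2 w2 := by
    rw [hw2]
    convert bddC2_aff (m2 / m) (-r) (-(1 - r)) 1 (c 2) using 4
    ring
  have n0 : ∀ t, 0 ≤ w0 t := fun t => by rw [hw0]; exact Real.smoothTransition.nonneg _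
  have n1 : ∀ t, 0 ≤ w1 t := fun t => by rw [hw1]; exact Real.smoothTransition.nonneg _
  have n2 : ∀ t, 0 ≤ w2 t := fun t => by rw [hw2]; exact Real.smoothTransition.nonneg _
  obtain ⟨χ, hχd⟩ : ∃ χ, χ = Real.smoothTransition (1 / 3) := ⟨_, rfl⟩
  have hχ : 0 < χ := by rw [hχd]; exact Real.smoothTransition.pos_of_pos (by norm_num)
  have hbig : ∀ t, χ ≤ w0 t ∨ χ ≤ w1 t ∨ χ ≤ w2 t := by
    intro x
    have hs : m0 / m * (x 0 - p * x 1 - (1 - p) * x 2 + c 0) +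
      m1 / m * (x 1 - q * x 0 - (1 - q) * x 2 + c 1) +
      m2 / m * (x 2 - r * x 0 - (1 - r) * x 1 + c 2) = 1 := by
      have := hms x
      rw [div_mul_eq_mul_div, div_mul_eq_mul_div, div_mul_eq_mul_div, ← add_div, ← add_div, this,
        div_self hmp.ne']
    rw [hχd, hw0, hw1, hw2]
    by_contra! hcon
    obtain ⟨u0, u1, u2⟩ := hcon
    have u0 := Real.smoothTransition.monotone.reflect_lt u0
    have u1 := Real.smoothTransition.monotone.reflect_lt u1
    have u2 := Real.smoothTransition.monotone.reflect_lt u2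
    linarith
  obtain ⟨d0, hd0, hd0'⟩ := comb_lower (q * (1 - r)) (r * p) (p * q) χ (by positivity)
    (by positivity) (by positivity) hχ
  obtain ⟨d1, hd1, hd1'⟩ := comb_lower ((1 - q) * r) (r * (1 - p)) (q * (1 - p)) χ (by positivity)
    (by positivity) (by positivity) hχ
  obtain ⟨d2, hd2, hd2'⟩ := comb_lower ((1 - q) * (1 - r)) ((1 - p) * (1 - r)) (p * (1 - q)) χ
    (by positivity) (by positivity) (by positivity) hχ
  obtain ⟨X, hX⟩ : ∃ X : (Fin 3 → ℝ) → ℝ, X = fun t =>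
    q * (1 - r) * w0 t + r * p * w1 t + p * q * w2 t := ⟨_, rfl⟩
  obtain ⟨Y, hY⟩ : ∃ X : (Fin 3 → ℝ) → ℝ, X = fun t =>
    (1 - q) * r * w0 t + r * (1 - p) * w1 t + q * (1 - p) * w2 t := ⟨_, rfl⟩
  obtain ⟨Z, hZ⟩ : ∃ X : (Fin 3 → ℝ) → ℝ, X = fun t =>
    (1 - q) * (1 - r) * w0 t + (1 - p) * (1 - r) * w1 t + p * (1 - q) * w2 t := ⟨_, rfl⟩
  have BX : BddC2 X := by rw [hX]; exact ((W0.smul _).add (W1.smul _)).add (W2.smul _)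
  have BY : BddC2 Y := by rw [hY]; exact ((W0.smul _).add (W1.smul _)).add (W2.smul _)
  have BZ : BddC2 Z := by rw [hZ]; exact ((W0.smul _).add (W1.smul _)).add (W2.smul _)
  obtain ⟨G, hG⟩ : ∃ G : (Fin 3 → ℝ) → Matrix (Fin 3) (Fin 3) ℝ,
    G = fun t => lapM (X t) (Y t) (Z t) (w0 t) (w1 t) (w2 t) := ⟨_, rfl⟩
  obtain ⟨H, hH⟩ : ∃ H : (Fin 3 → ℝ) → Matrix (Fin 3) (Fin 3) ℝ, H = fun t => (G t)⁻¹ := ⟨_, rfl⟩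
  have l0 : min χ (min d0 (min d1 d2)) ≤ χ := min_le_left _ _
  have l1 : min χ (min d0 (min d1 d2)) ≤ d0 := (min_le_right _ _).trans (min_le_left _ _)
  have l2 : min χ (min d0 (min d1 d2)) ≤ d1 :=
    (min_le_right _ _).trans ((min_le_right _ _).trans (min_le_left _ _))
  have l3 : min χ (min d0 (min d1 d2)) ≤ d2 :=
    (min_le_right _ _).trans ((min_le_right _ _).trans (min_le_right _ _))
  obtain ⟨hHG, L, c1, c2, c3, c4, c5, c6, c7, c8⟩ := core X Y Z w0 w1 w2 BX BY BZ W0 W1 W2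
    (min χ (min d0 (min d1 d2))) (by positivity)
    (fun t => by rw [hX]; exact l1.trans (hd0' _ _ _ (n0 t) (n1 t) (n2 t) (hbig t)))
    (fun t => by rw [hY]; exact l2.trans (hd1' _ _ _ (n0 t) (n1 t) (n2 t) (hbig t)))
    (fun t => by rw [hZ]; exact l3.trans (hd2' _ _ _ (n0 t) (n1 t) (n2 t) (hbig t)))
    n0 n1 n2
    (fun t => (hbig t).imp l0.trans (Or.imp l0.trans l0.trans)) H G hG hH
  refine ⟨H, L, c1, c2, c3, c4, c5, c6, c7, c8, ?_⟩
  intro y hyD v hv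
  obtain ⟨h0, h1, h2⟩ := (hmem y).1 hyD
  obtain ⟨s0, hs0⟩ : ∃ s, s = y 0 - p * y 1 - (1 - p) * y 2 + c 0 := ⟨_, rfl⟩
  obtain ⟨s1, hs1⟩ : ∃ s, s = y 1 - q * y 0 - (1 - q) * y 2 + c 1 := ⟨_, rfl⟩
  obtain ⟨s2, hs2⟩ : ∃ s, s = y 2 - r * y 0 - (1 - r) * y 1 + c 2 := ⟨_, rfl⟩
  obtain ⟨b0, b1, b2, B0, B1, B2, f0, f1, f2, e0, e1, e2⟩ :=
    normal_cone_rep p q r (c 0) (c 1) (c 2) (y 0) (y 1) (y 2) (v 0) (v 1) (v 2) m0 m1 m2 m hp hq hr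
      hm0 hm1 hm2 hm hmp s0 s1 s2 hs0 hs1 hs2 (hs0 ▸ h0) (hs1 ▸ h1) (hs2 ▸ h2) (by
        intro z0 z1 z2 g0 g1 g2
        have := hv ![z0, z1, z2] ((hmem _).2 ⟨by simpa using g0, by simpa using g1,
          by simpa using g2⟩)
        simpa [Fin.sum_univ_three] using this)
  have big := hbig y
  have N0 := n0 y
  have N1 := n1 y
  have N2 := n2 y
  have z0 : s0 = 0 → w0 y = 0 := by
    intro h
    rw [hw0]
    show Real.smoothTransition (m0 / m * (y 0 - p * y 1 - (1 - p) * y 2 + c 0)) = 0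
    rw [← hs0, h, mul_zero, Real.smoothTransition.zero]
  have z1 : s1 = 0 → w1 y = 0 := by
    intro h
    rw [hw1]
    show Real.smoothTransition (m1 / m * (y 1 - q * y 0 - (1 - q) * y 2 + c 1)) = 0
    rw [← hs1, h, mul_zero, Real.smoothTransition.zero]
  have z2 : s2 = 0 → w2 y = 0 := by
    intro h
    rw [hw2]
    show Real.smoothTransition (m2 / m * (y 2 - r * y 0 - (1 - r) * y 1 + c 2)) = 0
    rw [← hs2, h, mul_zero, Real.smoothTransition.zero]
  have k0 : ∃ a, 0 ≤ a ∧ (b0 = 0 → a = 0) ∧ X y * a = p * b0 ∧ Y y * a = (1 - p) * b0 ∧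
      w0 y * a = 0 := by
    rcases mul_eq_zero.1 f0 with h | h
    · exact ⟨0, le_rfl, fun _ => rfl, by simp [h], by simp [h], by simp⟩
    · have hz := z0 h
      have hg : 0 < r * w1 y + q * w2 y := by
        rcases big with h | h | h
        · linarith
        · have := hχ.trans_le h; positivity
        · have := hχ.trans_le h; positivity
      refine ⟨b0 / (r * w1 y + q * w2 y), by positivity, fun h => by simp [h], ?_, ?_, by simp [hz]⟩
      · rw [hX]; simp only [hz]; field_simp; ring
      · rw [hY]; simp only [hz]; field_simp; ring
  have k1 : ∃ a, 0 ≤ a ∧ (b1 = 0 → a = 0) ∧ X y * a = q * b1 ∧ Z y * a = (1 - q) * b1 ∧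
      w1 y * a = 0 := by
    rcases mul_eq_zero.1 f1 with h | h
    · exact ⟨0, le_rfl, fun _ => rfl, by simp [h], by simp [h], by simp⟩
    · have hz := z1 h
      have hg : 0 < (1 - r) * w0 y + p * w2 y := by
        rcases big with h | h | h
        · have := hχ.trans_le h; positivity
        · linarith
        · have := hχ.trans_le h; positivity
      refine ⟨b1 / ((1 - r) * w0 y + p * w2 y), by positivity, fun h => by simp [h], ?_, ?_,
        by simp [hz]⟩
      · rw [hX]; simp only [hz]; field_simp; ring
      · rw [hZ]; simp only [hz]; field_simp; ring
  have k2 : ∃ a, 0 ≤ a ∧ (b2 = 0 → a = 0) ∧ Y y * a = r * b2 ∧ Z y * a = (1 - r) * b2 ∧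
      w2 y * a = 0 := by
    rcases mul_eq_zero.1 f2 with h | h
    · exact ⟨0, le_rfl, fun _ => rfl, by simp [h], by simp [h], by simp⟩
    · have hz := z2 h
      have hg : 0 < (1 - q) * w0 y + (1 - p) * w1 y := by
        rcases big with h | h | h
        · have := hχ.trans_le h; positivity
        · have := hχ.trans_le h; positivity
        · linarith
      refine ⟨b2 / ((1 - q) * w0 y + (1 - p) * w1 y), by positivity, fun h => by simp [h], ?_, ?_,
        by simp [hz]⟩
      · rw [hY]; simp only [hz]; field_simp; ring
      · rw [hZ]; simp only [hz]; field_simp; ring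
  obtain ⟨a0, p0, q0, x0, y0, t0⟩ := k0
  obtain ⟨a1, p1, q1, x1, y1, t1⟩ := k1
  obtain ⟨a2, p2, q2, x2, y2, t2⟩ := k2
  refine ⟨![a0, a1, a2], ?_, ?_, ?_⟩
  · intro i; fin_cases i <;> simpa
  · intro i hi
    rw [Fin.sum_univ_three] at hi
    fin_cases i <;> simp at hi ⊢
    · exact q0 ((mul_eq_zero.1 f0).resolve_right (by rw [hs0]; intro h; linarith))
    · exact q1 ((mul_eq_zero.1 f1).resolve_right (by rw [hs1]; intro h; linarith))
    · exact q2 ((mul_eq_zero.1 f2).resolve_right (by rw [hs2]; intro h; linarith))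
  · have hvG : v = G y *ᵥ (-![a0, a1, a2]) := by
      rw [hG]
      funext i
      fin_cases i <;> simp [lapM, Matrix.mulVec, dotProduct, Fin.sum_univ_three] <;> linarith
    rw [hvG, Matrix.mulVec_mulVec, hHG, Matrix.one_mulVec]
end

section
/- Consider the controlled setting where 𝒞 is a compact metric space, u ↦ P^u_{i,j} and u ↦ c̄^u_i are continuous for all i,j, and every P^u is irreducible with invariant probability μ^u. Define Ĉ_{i,j} := min_{u∈𝒞} C^u_{i,j}, where C^u is the cost matrix associated with (P^u, c̄^u). If the domain D is nonempty, then: (1) min_{u∈𝒞} ∑_{i=1}^d μ^u_i c̄^u_i ≥ 0; (2) Ĉ_{i,j} + Ĉ_{j,i} ≥ 0 for all 1 ≤ i ≠ j ≤ d; and (3) D_∘ = D ∩ {y ∈ ℝ^d : y_d = 0} is a compact subset of ℝ^d. If moreover D has nonempty interior, then min_{u∈𝒞} ∑_i μ^u_i c̄^u_i > 0 and Ĉ_{i,j} + Ĉ_{j,i} > 0 for all 1 ≤ i ≠ j ≤ d. -/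
open Matrix

lemma cnd_closed {m : ℕ} (P : Matrix (Fin m) (Fin m) ℝ) (hP0 : ∀ i j, 0 ≤ P i j)
    (hirr : ∀ i j, ∃ k : ℕ, 1 ≤ k ∧ 0 < (P ^ k) i j)
    (S : Fin m → Prop) (hS : ∀ i l, S i → 0 < P i l → S l) (i j : Fin m) (hi : S i) : S j := by
  have key : ∀ k : ℕ, ∀ l, 0 < (P ^ k) i l → S l := by
    intro k
    induction k with
    | zero =>
      intro l hl
      rw [pow_zero, Matrix.one_apply] at hl
      split_ifs at hl with h
      · exact h ▸ hi
      · exact absurd hl (lt_irrefl _)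
    | succ k ih =>
      intro l hl
      rw [pow_succ, Matrix.mul_apply] at hl
      obtain ⟨q, -, hq⟩ := Finset.exists_lt_of_sum_lt
        (s := Finset.univ) (f := fun _ : Fin m => (0 : ℝ)) (by simpa using hl)
      have h2 := hP0 q l
      have h3 : 0 < P q l := by
        rcases h2.lt_or_eq with h | h
        · exact h
        · simp [← h] at hq
      have h4 : 0 < (P ^ k) i q := by
        by_contra hc
        push Not at hc
        nlinarith
      exact hS q l (ih q h4) h3
  obtain ⟨k, -, hk⟩ := hirr i j
  exact key k j hk

lemma cnd_max {m : ℕ} (P : Matrix (Fin m) (Fin m) ℝ) (hP0 : ∀ i j, 0 ≤ P i j)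
    (hP1 : ∀ i, ∑ j, P i j = 1)
    (hirr : ∀ i j, ∃ k : ℕ, 1 ≤ k ∧ 0 < (P ^ k) i j)
    (j : Fin m) (v : Fin m → ℝ) (hj : v j = 0)
    (hv : ∀ i, i ≠ j → ∑ l, P i l * v l ≤ v i) (i : Fin m) : 0 ≤ v i := by
  haveI : Nonempty (Fin m) := ⟨j⟩
  obtain ⟨a, ha⟩ := Finite.exists_min v
  by_contra hneg
  push Not at hneg
  have ha0 : v a < 0 := (ha i).trans_lt hneg
  have := cnd_closed P hP0 hirr (fun l => v l = v a) (by
    intro p l hp hpl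
    have hpj : p ≠ j := by
      rintro rfl
      linarith
    have h1 := hv p hpj
    have h2 : ∑ q, P p q * (v q - v a) ≤ 0 := by
      simp only [mul_sub, Finset.sum_sub_distrib, ← Finset.sum_mul, hP1]
      linarith
    have h3 : P p l * (v l - v a) ≤ ∑ q, P p q * (v q - v a) :=
      Finset.single_le_sum (f := fun q => P p q * (v q - v a))
        (fun q _ => mul_nonneg (hP0 p q) (sub_nonneg.2 (ha q))) (Finset.mem_univ l)
    have h4 := ha l
    show v l = v a
    by_contra hne
    have h5 : 0 < v l - v a := sub_pos.2 (lt_of_le_of_ne h4 (Ne.symm hne))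
    have := mul_pos hpl h5
    linarith) a j rfl
  linarith

lemma cnd_cost {n : ℕ} (P : Matrix (Fin (n+2)) (Fin (n+2)) ℝ) (hP0 : ∀ i j, 0 ≤ P i j)
    (hP1 : ∀ i, ∑ j, P i j = 1)
    (hirr : ∀ i j, ∃ k : ℕ, 1 ≤ k ∧ 0 < (P ^ k) i j)
    (c v : Fin (n+2) → ℝ) (j : Fin (n+2)) (hj : v j = 0)
    (hv : ∀ k, v (j.succAbove k) = (((1 - P).submatrix j.succAbove j.succAbove)⁻¹ *ᵥ
          fun l => c (j.succAbove l)) k) (i : Fin (n+2)) (hi : i ≠ j) :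
    v i = ∑ l, P i l * v l + c i := by
  set A := (1 - P).submatrix j.succAbove j.succAbove with hA
  have hform : ∀ w : Fin (n+2) → ℝ, w j = 0 → ∀ k,
      (A *ᵥ fun l => w (j.succAbove l)) k
        = w (j.succAbove k) - ∑ l, P (j.succAbove k) l * w l := by
    intro w hw k
    have h1 : ((1 - P) *ᵥ w) (j.succAbove k)
        = w (j.succAbove k) - ∑ l, P (j.succAbove k) l * w l := by
      rw [Matrix.sub_mulVec, Matrix.one_mulVec]
      rfl
    rw [← h1, Matrix.mulVec, Matrix.mulVec, dotProduct, dotProduct,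
      Fin.sum_univ_succAbove _ j, hw]
    simp [hA]
  have hinj : Function.Injective A.mulVec := by
    have hnn : ∀ x : Fin (n+1) → ℝ, A *ᵥ x = 0 → ∀ k, 0 ≤ x k := by
      intro x hx k
      have h0 : (j.insertNth (0:ℝ) x : Fin (n+2) → ℝ) j = 0 := by simp
      have h1 := cnd_max P hP0 hP1 hirr j (j.insertNth (0:ℝ) x) h0 (by
        intro p hp
        obtain ⟨q, rfl⟩ := Fin.exists_succAbove_eq hp
        have h2 := hform _ h0 q
        simp only [Fin.insertNth_apply_succAbove] at h2
        have h3 : (A *ᵥ x) q = 0 := by rw [hx]; rfl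
        have h4 : (A *ᵥ fun l => x l) q = 0 := h3
        rw [h4] at h2
        simp only [Fin.insertNth_apply_succAbove]
        linarith) (j.succAbove k)
      simpa using h1
    intro x y hxy
    have hxy' : A *ᵥ x = A *ᵥ y := hxy
    funext k
    have h1 := hnn (x - y) (by rw [Matrix.mulVec_sub, hxy', sub_self]) k
    have h2 := hnn (y - x) (by rw [Matrix.mulVec_sub, hxy', sub_self]) k
    simp only [Pi.sub_apply] at h1 h2
    linarith
  have hunit : IsUnit A := Matrix.mulVec_injective_iff_isUnit.1 hinj
  have hdet : IsUnit A.det := (Matrix.isUnit_iff_isUnit_det A).1 hunit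
  obtain ⟨k, rfl⟩ := Fin.exists_succAbove_eq hi
  have h1 := hform v hj k
  have h2 : (fun l => v (j.succAbove l)) = A⁻¹ *ᵥ fun l => c (j.succAbove l) := funext hv
  rw [h2, Matrix.mulVec_mulVec, Matrix.mul_nonsing_inv A hdet, Matrix.one_mulVec] at h1
  linarith

lemma cnd_bound {n : ℕ} (P : Matrix (Fin (n+2)) (Fin (n+2)) ℝ) (hP0 : ∀ i j, 0 ≤ P i j)
    (hP1 : ∀ i, ∑ j, P i j = 1)
    (hirr : ∀ i j, ∃ k : ℕ, 1 ≤ k ∧ 0 < (P ^ k) i j)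
    (c v : Fin (n+2) → ℝ) (j : Fin (n+2)) (hj : v j = 0)
    (hv : ∀ k, v (j.succAbove k) = (((1 - P).submatrix j.succAbove j.succAbove)⁻¹ *ᵥ
          fun l => c (j.succAbove l)) k)
    (y : Fin (n+2) → ℝ) (η : ℝ) (hη : 0 ≤ η)
    (hy : ∀ i, ∑ l, P i l * y l - c i + η ≤ y i) (i : Fin (n+2)) (hi : i ≠ j) :
    y j - y i + η ≤ v i := by
  have h := cnd_max P hP0 hP1 hirr j (fun l => v l + y l - y j - η + (if l = j then η else 0))
    (by simp [hj]) (by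
      intro p hp
      have h1 := cnd_cost P hP0 hP1 hirr c v j hj hv p hp
      have h2 := hy p
      have h3 : ∑ l, P p l * (v l + y l - y j - η + (if l = j then η else 0))
          = ∑ l, P p l * v l + ∑ l, P p l * y l - y j - η + P p j * η := by
        simp only [mul_add, mul_sub, Finset.sum_add_distrib, Finset.sum_sub_distrib,
          ← Finset.sum_mul, hP1]
        simp
      have h4 : P p j ≤ 1 := by
        rw [← hP1 p]
        exact Finset.single_le_sum (fun q _ => hP0 p q) (Finset.mem_univ j)
      have h5 : P p j * η ≤ η := mul_le_of_le_one_left hη h4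
      simp only [h3, if_neg hp]
      linarith) i
  simp only [if_neg hi] at h
  linarith

lemma cnd_mu {m : ℕ} (P : Matrix (Fin m) (Fin m) ℝ) (c μ : Fin m → ℝ)
    (hμpos : ∀ i, 0 < μ i) (hμsum : ∑ i, μ i = 1)
    (hμinv : ∀ j, ∑ i, μ i * P i j = μ j)
    (y : Fin m → ℝ) (η : ℝ)
    (hy : ∀ i, ∑ l, P i l * y l - c i + η ≤ y i) : η ≤ ∑ i, μ i * c i := by
  have h1 : ∑ i, μ i * (∑ l, P i l * y l - c i + η) ≤ ∑ i, μ i * y i :=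
    Finset.sum_le_sum fun i _ => mul_le_mul_of_nonneg_left (hy i) (hμpos i).le
  have h2 : ∑ i, μ i * ∑ l, P i l * y l = ∑ l, μ l * y l := by
    simp only [Finset.mul_sum]
    rw [Finset.sum_comm]
    refine Finset.sum_congr rfl fun l _ => ?_
    rw [← hμinv l, Finset.sum_mul]
    exact Finset.sum_congr rfl fun i _ => by ring
  simp only [mul_add, mul_sub, Finset.sum_add_distrib, Finset.sum_sub_distrib,
    ← Finset.sum_mul, hμsum, h2] at h1
  linarith

lemma cnd_diag {n : ℕ} (P : Matrix (Fin (n+2)) (Fin (n+2)) ℝ) (hP0 : ∀ i j, 0 ≤ P i j)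
    (hP1 : ∀ i, ∑ j, P i j = 1)
    (hirr : ∀ i j, ∃ k : ℕ, 1 ≤ k ∧ 0 < (P ^ k) i j) (i : Fin (n+2)) : 0 < 1 - P i i := by
  by_contra hc
  push Not at hc
  obtain ⟨j, hj⟩ := exists_ne i
  refine hj (cnd_closed P hP0 hirr (fun l => l = i) ?_ i j rfl)
  rintro p l rfl hl
  show l = p
  by_contra hne
  have h1 := hP1 p
  have h2 := Finset.add_le_sum (f := fun q => P p q) (s := Finset.univ)
    (fun q _ => hP0 p q) (Finset.mem_univ p) (Finset.mem_univ l) (Ne.symm hne)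
  simp only [h1] at h2
  linarith

/-- Controlled setting: `𝒞` a compact metric space,
`u ↦ P u i j` and `u ↦ c u i` continuous, every `P u` irreducible with invariant
probability `μ u`, and `Ĉ i j := ⨅ u, C u i j` where `C u` is the cost matrix
associated with `(P u, c u)`.  If the domain `D` is nonempty then:
(1) `⨅ u, ∑ i, μ u i * c u i ≥ 0`;
(2) `Ĉ i j + Ĉ j i ≥ 0` for all `i ≠ j`;
(3) the slice `D_∘ = D ∩ {y_d = 0}` is compact.
If moreover `D` has nonempty interior, the inequalities in (1) and (2) are strict. -/
theorem controlled_nonempty_domain_necessary_conditions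
    (n : ℕ) (𝒞 : Type*) [MetricSpace 𝒞] [CompactSpace 𝒞] [Nonempty 𝒞]
    (P : 𝒞 → Matrix (Fin (n + 2)) (Fin (n + 2)) ℝ)
    (c : 𝒞 → Fin (n + 2) → ℝ)
    (μ : 𝒞 → Fin (n + 2) → ℝ)
    (C : 𝒞 → Fin (n + 2) → Fin (n + 2) → ℝ)
    (hPcont : ∀ i j, Continuous fun u => P u i j)
    (hccont : ∀ i, Continuous fun u => c u i)
    (hP0 : ∀ u i j, 0 ≤ P u i j)
    (hP1 : ∀ u i, ∑ j, P u i j = 1)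
    (hirr : ∀ u i j, ∃ k : ℕ, 1 ≤ k ∧ 0 < (P u ^ k) i j)
    (hμpos : ∀ u i, 0 < μ u i)
    (hμsum : ∀ u, ∑ i, μ u i = 1)
    (hμinv : ∀ u j, ∑ i, μ u i * P u i j = μ u j)
    (hCdiag : ∀ u j, C u j j = 0)
    (hCoff : ∀ u (j : Fin (n + 2)) (k : Fin (n + 1)),
      C u (j.succAbove k) j =
        (((1 - P u).submatrix j.succAbove j.succAbove)⁻¹ *ᵥ
          fun l => c u (j.succAbove l)) k)
    (D : Set (Fin (n + 2) → ℝ))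
    (hD : D = {y | ∀ i, ∀ u : 𝒞, (∑ j, P u i j * y j) - c u i ≤ y i}) :
    (D.Nonempty →
      (0 ≤ ⨅ u : 𝒞, ∑ i, μ u i * c u i) ∧
      (∀ i j : Fin (n + 2), i ≠ j →
        0 ≤ (⨅ u : 𝒞, C u i j) + ⨅ u : 𝒞, C u j i) ∧
      IsCompact (D ∩ {y | y (Fin.last (n + 1)) = 0})) ∧
    ((interior D).Nonempty →
      (0 < ⨅ u : 𝒞, ∑ i, μ u i * c u i) ∧
      (∀ i j : Fin (n + 2), i ≠ j →
        0 < (⨅ u : 𝒞, C u i j) + ⨅ u : 𝒞, C u j i)) := by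
  subst hD
  have hmain : ∀ (y : Fin (n+2) → ℝ) (η : ℝ), 0 ≤ η →
      (∀ i, ∀ u : 𝒞, (∑ j, P u i j * y j) - c u i + η ≤ y i) →
      (∀ u, η ≤ ∑ i, μ u i * c u i) ∧
      ∀ u i j, i ≠ j → y j - y i + η ≤ C u i j := by
    intro y η hη hy
    refine ⟨fun u => cnd_mu (P u) (c u) (μ u) (hμpos u) (hμsum u) (hμinv u) y η
      (fun i => hy i u), fun u i j hij => ?_⟩
    exact cnd_bound (P u) (hP0 u) (hP1 u) (hirr u) (c u) (fun l => C u l j) j (hCdiag u j)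
      (hCoff u j) y η hη (fun i => hy i u) i hij
  refine ⟨?_, ?_⟩
  · rintro ⟨y, hy⟩
    obtain ⟨h1, h2⟩ := hmain y 0 le_rfl (fun i u => by simpa using hy i u)
    refine ⟨le_ciInf h1, fun i j hij => ?_, ?_⟩
    · have a := le_ciInf (fun u => h2 u i j hij)
      have b := le_ciInf (fun u => h2 u j i hij.symm)
      linarith
    · obtain ⟨u⟩ := ‹Nonempty 𝒞›
      refine (isCompact_Icc (a := fun i => - C u i (Fin.last (n+1)))
        (b := fun i => C u (Fin.last (n+1)) i)).of_isClosed_subset ?_ ?_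
      · refine IsClosed.inter ?_ (isClosed_eq (continuous_apply _) continuous_const)
        simp only [Set.setOf_forall]
        refine isClosed_iInter fun i => isClosed_iInter fun w => isClosed_le ?_ ?_ <;> fun_prop
      · rintro z ⟨hz, hz0⟩
        have hz0' : z (Fin.last (n+1)) = 0 := hz0
        obtain ⟨-, h4⟩ := hmain z 0 le_rfl (fun i u => by simpa using hz i u)
        refine ⟨fun i => ?_, fun i => ?_⟩
        · show - C u i (Fin.last (n+1)) ≤ z i
          by_cases hi : i = Fin.last (n+1)
          · rw [hi, hCdiag, hz0', neg_zero]
          · have := h4 u i _ hi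
            linarith
        · show z i ≤ C u (Fin.last (n+1)) i
          by_cases hi : i = Fin.last (n+1)
          · rw [hi, hCdiag, hz0']
          · have := h4 u _ i (Ne.symm hi)
            linarith
  · rintro ⟨y, hy⟩
    rw [mem_interior_iff_mem_nhds, Metric.mem_nhds_iff] at hy
    obtain ⟨ε, hε, hball⟩ := hy
    have hδ : ∀ i, ∃ δ : ℝ, 0 < δ ∧ ∀ u, δ ≤ 1 - P u i i := by
      intro i
      obtain ⟨u, -, hu⟩ := isCompact_univ.exists_isMinOn (Set.univ_nonempty (α := 𝒞))
        (f := fun u => 1 - P u i i) ((continuous_const.sub (hPcont i i)).continuousOn)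
      exact ⟨1 - P u i i, cnd_diag (P u) (hP0 u) (hP1 u) (hirr u) i,
        fun w => hu (Set.mem_univ w)⟩
    choose δ hδ0 hδ1 using hδ
    obtain ⟨a, ha⟩ := Finite.exists_min δ
    have hη : 0 < ε / 2 * δ a := mul_pos (half_pos hε) (hδ0 a)
    obtain ⟨h1, h2⟩ := hmain y (ε / 2 * δ a) hη.le (by
      intro i u
      have hm : y - Pi.single i (ε / 2) ∈ Metric.ball y ε := by
        rw [Metric.mem_ball, dist_eq_norm, sub_sub_cancel_left, norm_neg, Pi.norm_single,
          Real.norm_of_nonneg (half_pos hε).le]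
        exact half_lt_self hε
      have h3 := hball hm i u
      have h4 : ∑ j, P u i j * (y - Pi.single i (ε / 2) : Fin (n+2) → ℝ) j
          = ∑ j, P u i j * y j - P u i i * (ε / 2) := by
        simp only [Pi.sub_apply, mul_sub, Finset.sum_sub_distrib]
        simp [Pi.single_apply]
      rw [h4, Pi.sub_apply, Pi.single_eq_same] at h3
      have h5 : ε / 2 * δ a ≤ ε / 2 * (1 - P u i i) :=
        mul_le_mul_of_nonneg_left ((ha i).trans (hδ1 i u)) (half_pos hε).le
      linarith)
    refine ⟨hη.trans_le (le_ciInf h1), fun i j hij => ?_⟩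
    have a := le_ciInf (fun u => h2 u i j hij)
    have b := le_ciInf (fun u => h2 u j i hij.symm)
    linarith
end

section
/- In the uncontrolled setting with an irreducible stochastic matrix P and invariant probability μ, assume ∑_{i=1}^d μ_i c̄_i ≥ 0. Then for every 1 ≤ j ≤ d, the point z^j := −C_{·,j} ∈ ℝ^d satisfies (Q z^j + c̄)_i = 0 for all i ≠ j and (Q z^j + c̄)_j = (∑_{i=1}^d μ_i c̄_i)/μ_j ≥ 0; in particular z^j ∈ D. -/
open Matrix

lemma aux_pow_fix {m : ℕ} (P : Matrix (Fin m) (Fin m) ℝ) (x : Fin m → ℝ)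
    (h : P *ᵥ x = x) (k : ℕ) : (P ^ k) *ᵥ x = x := by
  induction k with
  | zero => simp
  | succ k ih => rw [pow_succ, ← Matrix.mulVec_mulVec, h, ih]

lemma aux_pow_nonneg {m : ℕ} (P : Matrix (Fin m) (Fin m) ℝ)
    (h : ∀ i j, 0 ≤ P i j) (k : ℕ) : ∀ i j, 0 ≤ (P ^ k) i j := by
  induction k with
  | zero =>
    intro i j
    rw [pow_zero, Matrix.one_apply]
    split_ifs <;> norm_num
  | succ k ih =>
    intro i j
    rw [pow_succ, Matrix.mul_apply]
    exact Finset.sum_nonneg fun l _ => mul_nonneg (ih i l) (h l j)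

lemma aux_harm {n : ℕ} (P : Matrix (Fin (n + 2)) (Fin (n + 2)) ℝ)
    (hP0 : ∀ i j, 0 ≤ P i j)
    (hP1 : ∀ i, ∑ j, P i j = 1)
    (hirr : ∀ i j, ∃ k : ℕ, 1 ≤ k ∧ 0 < (P ^ k) i j)
    (x : Fin (n + 2) → ℝ) (h : P *ᵥ x = x) (i j : Fin (n + 2)) : x i ≤ x j := by
  obtain ⟨m, hm⟩ := Finite.exists_max x
  obtain ⟨k, -, hk⟩ := hirr m j
  have h1 : (P ^ k) *ᵥ (fun _ => (1 : ℝ)) = fun _ => 1 := by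
    apply aux_pow_fix
    funext a
    simpa [Matrix.mulVec, dotProduct] using hP1 a
  have h1m : ∑ l, (P ^ k) m l = 1 := by
    simpa [Matrix.mulVec, dotProduct] using congrFun h1 m
  have hxm : ∑ l, (P ^ k) m l * x l = x m := by
    simpa [Matrix.mulVec, dotProduct] using congrFun (aux_pow_fix P x h k) m
  have hz : ∑ l, (P ^ k) m l * (x m - x l) = 0 := by
    simp only [mul_sub, Finset.sum_sub_distrib, ← Finset.sum_mul, h1m, hxm]
    ring
  rw [Finset.sum_eq_zero_iff_of_nonneg
    (fun l _ => mul_nonneg (aux_pow_nonneg P hP0 k m l) (sub_nonneg.2 (hm l)))] at hz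
  have hj := hz j (Finset.mem_univ j)
  rcases mul_eq_zero.1 hj with h0 | h0
  · exact absurd h0 hk.ne'
  · have := hm i
    linarith

lemma aux_inv {n : ℕ} (P : Matrix (Fin (n + 2)) (Fin (n + 2)) ℝ) (μ : Fin (n + 2) → ℝ)
    (hμinv : ∀ j, ∑ i, μ i * P i j = μ j) (x : Fin (n + 2) → ℝ) :
    ∑ i, μ i * (x i - ∑ k, P i k * x k) = 0 := by
  simp only [mul_sub, Finset.sum_sub_distrib, Finset.mul_sum]
  rw [Finset.sum_comm (f := fun i k => μ i * (P i k * x k))]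
  simp only [← mul_assoc, ← Finset.sum_mul, hμinv, sub_self]

lemma aux_sub {n : ℕ} (P : Matrix (Fin (n + 2)) (Fin (n + 2)) ℝ) (x : Fin (n + 2) → ℝ)
    (j : Fin (n + 2)) (hx : x j = 0) (k : Fin (n + 1)) :
    ((1 - P).submatrix j.succAbove j.succAbove *ᵥ fun l => x (j.succAbove l)) k
      = x (j.succAbove k) - ∑ l, P (j.succAbove k) l * x l := by
  have h : ((1 - P) *ᵥ x) (j.succAbove k)
      = x (j.succAbove k) - ∑ l, P (j.succAbove k) l * x l := by
    rw [Matrix.sub_mulVec, Matrix.one_mulVec]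
    rfl
  rw [← h]
  simp only [Matrix.mulVec, dotProduct]
  rw [Fin.sum_univ_succAbove _ j, hx]
  simp

lemma aux_unit {n : ℕ} (P : Matrix (Fin (n + 2)) (Fin (n + 2)) ℝ) (μ : Fin (n + 2) → ℝ)
    (hP0 : ∀ i j, 0 ≤ P i j)
    (hP1 : ∀ i, ∑ j, P i j = 1)
    (hirr : ∀ i j, ∃ k : ℕ, 1 ≤ k ∧ 0 < (P ^ k) i j)
    (hμpos : ∀ i, 0 < μ i)
    (hμinv : ∀ j, ∑ i, μ i * P i j = μ j) (j : Fin (n + 2)) :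
    IsUnit ((1 - P).submatrix j.succAbove j.succAbove).det := by
  rw [isUnit_iff_ne_zero]
  intro hdet
  obtain ⟨v, hv0, hv⟩ := Matrix.exists_mulVec_eq_zero_iff.2 hdet
  apply hv0
  let x : Fin (n + 2) → ℝ := j.insertNth (0 : ℝ) v
  have hxj : x j = 0 := by simp [x]
  have hxv : (fun l => x (j.succAbove l)) = v := by
    funext l
    simp [x]
  have hne : ∀ k, x (j.succAbove k) - ∑ l, P (j.succAbove k) l * x l = 0 := by
    intro k
    rw [← aux_sub P x j hxj k, hxv, hv]
    rfl
  have hs := aux_inv P μ hμinv x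
  rw [Fin.sum_univ_succAbove _ j] at hs
  simp only [hne, mul_zero, Finset.sum_const_zero, add_zero] at hs
  have hj : x j - ∑ l, P j l * x l = 0 := (mul_eq_zero.1 hs).resolve_left (hμpos j).ne'
  have hfix : P *ᵥ x = x := by
    funext i
    rcases Fin.eq_self_or_eq_succAbove j i with rfl | ⟨k, rfl⟩
    · exact (sub_eq_zero.1 hj).symm
    · exact (sub_eq_zero.1 (hne k)).symm
  rw [← hxv]
  funext l
  have := aux_harm P hP0 hP1 hirr x hfix
  have h1 := le_antisymm (this (j.succAbove l) j) (this j (j.succAbove l))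
  rw [h1, hxj]
  rfl

/-- Uncontrolled setting with an irreducible stochastic matrix `P`
(`d = n + 2`), invariant probability `μ`, cost vector `c̄` and cost matrix `C`;
assume `∑ i, μ i * c̄ i ≥ 0`.  Then for every `j`, the point `z^j := −C_{·,j}`
satisfies `(Q z^j + c̄)_i = 0` for all `i ≠ j` and
`(Q z^j + c̄)_j = (∑ i, μ i * c̄ i)/μ j ≥ 0`; in particular `z^j ∈ D`. -/
theorem extreme_candidate_points_belong_to_domain
    (n : ℕ)
    (P : Matrix (Fin (n + 2)) (Fin (n + 2)) ℝ)
    (c : Fin (n + 2) → ℝ) (μ : Fin (n + 2) → ℝ)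
    (hP0 : ∀ i j, 0 ≤ P i j)
    (hP1 : ∀ i, ∑ j, P i j = 1)
    (hirr : ∀ i j, ∃ k : ℕ, 1 ≤ k ∧ 0 < (P ^ k) i j)
    (hμpos : ∀ i, 0 < μ i)
    (hμsum : ∑ i, μ i = 1)
    (hμinv : ∀ j, ∑ i, μ i * P i j = μ j)
    (C : Fin (n + 2) → Fin (n + 2) → ℝ)
    (hCdiag : ∀ j, C j j = 0)
    (hCoff : ∀ (j : Fin (n + 2)) (k : Fin (n + 1)),
      C (j.succAbove k) j =
        (((1 - P).submatrix j.succAbove j.succAbove)⁻¹ *ᵥ fun l => c (j.succAbove l)) k)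
    (D : Set (Fin (n + 2) → ℝ))
    (hD : D = {x | ∀ i, (∑ j, P i j * x j) - c i ≤ x i})
    (hmean : 0 ≤ ∑ i, μ i * c i) :
    ∀ j : Fin (n + 2),
      (∀ i, i ≠ j → (-C i j - ∑ k, P i k * (-C k j)) + c i = 0) ∧
      (-C j j - ∑ k, P j k * (-C k j)) + c j = (∑ i, μ i * c i) / μ j ∧
      0 ≤ (∑ i, μ i * c i) / μ j ∧
      (fun i => -C i j) ∈ D := by
  intro j
  have hu := aux_unit P μ hP0 hP1 hirr hμpos hμinv j
  have hoff : ∀ k, C (j.succAbove k) j - ∑ l, P (j.succAbove k) l * C l j = c (j.succAbove k) := by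
    intro k
    rw [← aux_sub P (fun i => C i j) j (hCdiag j) k]
    have : (fun l => C (j.succAbove l) j) =
        ((1 - P).submatrix j.succAbove j.succAbove)⁻¹ *ᵥ fun l => c (j.succAbove l) :=
      funext (hCoff j)
    rw [this, Matrix.mulVec_mulVec, Matrix.mul_nonsing_inv _ hu, Matrix.one_mulVec]
  have A : ∀ i, i ≠ j → (-C i j - ∑ k, P i k * (-C k j)) + c i = 0 := by
    intro i hi
    obtain ⟨k, rfl⟩ := (Fin.eq_self_or_eq_succAbove j i).resolve_left hi
    have := hoff k
    simp only [mul_neg, Finset.sum_neg_distrib]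
    linarith
  have B : (-C j j - ∑ k, P j k * (-C k j)) + c j = (∑ i, μ i * c i) / μ j := by
    rw [eq_div_iff (hμpos j).ne']
    have hs := aux_inv P μ hμinv (fun i => C i j)
    rw [Fin.sum_univ_succAbove _ j] at hs
    simp only [hoff] at hs
    rw [Fin.sum_univ_succAbove (fun i => μ i * c i) j]
    simp only [mul_neg, Finset.sum_neg_distrib]
    linarith
  have E : 0 ≤ (∑ i, μ i * c i) / μ j := div_nonneg hmean (hμpos j).le
  refine ⟨A, B, E, ?_⟩
  rw [hD]
  intro i
  by_cases hi : i = j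
  · subst hi
    dsimp only
    linarith
  · have := A i hi
    dsimp only
    linarith
end
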